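/- arXiv:1803.09416 — 3 statements merged into one kernel-verified Lean document; each statement's English description precedes it below -/
import Mathlib

section
/- Let H be an essentially 2-edge-connected simple graph and let Ξ be a collapsible subgraph of H. If the graph obtained from H by deleting all vertices of Ξ has at most 3 edges, then H has a dominating closed trail. -/
open SimpleGraph

/-- A dominating closed trail of `H`: a closed walk repeating no edge such that
every edge of `H` has an endpoint in its support. -/
def IsDCT {V : Type*} (H : SimpleGraph V) {v : V} (w : H.Walk v v) : Prop :=
  w.IsTrail ∧ ∀ e ∈ H.edgeSet, ∃ u ∈ w.support, u ∈ e

/-- `H` is essentially 2-edge-connected: it is connected and, for every edge `e`,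
at most one connected component of `H - e` contains an edge (i.e. any two edges
of `H - e` lie in the same component). -/
def EssentiallyTwoEdgeConnected {V : Type*} (H : SimpleGraph V) : Prop :=
  H.Connected ∧ ∀ e ∈ H.edgeSet, ∀ a ∈ (H.deleteEdges {e}).edgeSet,
    ∀ b ∈ (H.deleteEdges {e}).edgeSet,
      ∀ u ∈ a, ∀ w ∈ b, (H.deleteEdges {e}).Reachable u w

/-- A graph with at least two vertices is collapsible if for every vertex subset `S`
of even (finite) cardinality there is a spanning connected subgraph whose set of
odd-degree vertices is exactly `S`. -/
def Collapsible {W : Type*} (Ξ : SimpleGraph W) : Prop :=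
  2 ≤ Nat.card W ∧ ∀ S : Set W, S.Finite → Even S.ncard →
    ∃ F : SimpleGraph W, F ≤ Ξ ∧ F.Connected ∧
      ∀ v : W, (Odd (F.neighborSet v).ncard ↔ v ∈ S)


namespace DCTProof

/-- In a finite even graph there is a closed trail visiting a whole component. -/
theorem euler {V : Type*} [Finite V] (G : SimpleGraph V)
    (heven : ∀ v, Even (G.neighborSet v).ncard) (v0 : V) :
    ∃ (v : V) (w : G.Walk v v), w.IsTrail ∧ ∀ u, G.Reachable v0 u → u ∈ w.support := by
  classical
  have := Fintype.ofFinite V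
  let A : Set ℕ := {n | ∃ (v u : V) (p : G.Walk v u), p.IsTrail ∧ G.Reachable v0 v ∧ p.length = n}
  have hA0 : A.Nonempty := ⟨0, v0, v0, Walk.nil, by simp, Reachable.refl _, rfl⟩
  have hAb : BddAbove A := by
    refine ⟨G.edgeFinset.card, ?_⟩
    rintro n ⟨v, u, p, hp, -, rfl⟩
    exact hp.length_le_card_edgeFinset
  obtain ⟨v, u, p, hp, hv, hlen⟩ := Nat.sSup_mem hA0 hAb
  have hmax : ∀ (a b : V) (q : G.Walk a b), q.IsTrail → G.Reachable v0 a → q.length ≤ p.length := by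
    intro a b q hq ha
    rw [hlen]
    exact le_csSup hAb ⟨a, b, q, hq, ha, rfl⟩
  have hvu : v = u := by
    by_contra hne
    have hodd : ¬ Even (p.edges.countP fun e => v ∈ e) := by
      rw [hp.even_countP_edges_iff v]
      intro h
      exact (h hne).1 rfl
    have hall : ∀ x, G.Adj v x → s(v, x) ∈ p.edges := by
      intro x hx
      by_contra hnot
      have hq : (Walk.cons hx.symm p).IsTrail := by
        rw [Walk.isTrail_cons]
        exact ⟨hp, by rwa [Sym2.eq_swap]⟩
      have := hmax _ _ _ hq (hv.trans hx.reachable)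
      simp at this
    apply hodd
    have h1 : (p.edges.countP fun e => v ∈ e) = (G.incidenceFinset v).card := by
      rw [List.countP_eq_length_filter, ← List.toFinset_card_of_nodup (hp.edges_nodup.filter _)]
      congr 1
      ext e
      simp only [List.mem_toFinset, List.mem_filter, decide_eq_true_eq, mem_incidenceFinset,
        incidenceSet, Set.mem_ofPred_eq]
      constructor
      · rintro ⟨h1, h2⟩
        exact ⟨p.edges_subset_edgeSet h1, h2⟩
      · rintro ⟨h1, h2⟩
        refine ⟨?_, h2⟩
        obtain ⟨x, rfl⟩ := Sym2.mem_iff_exists.mp h2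
        exact hall x h1
    rw [h1, card_incidenceFinset_eq_degree, ← card_neighborSet_eq_degree, ← Set.toFinset_card,
      ← Set.ncard_eq_toFinset_card']
    exact heven v
  subst hvu
  refine ⟨v, p, hp, ?_⟩
  intro u hu
  obtain ⟨q⟩ := hv.symm.trans hu
  by_contra hnot
  obtain ⟨d, hd, h1, h2⟩ := q.exists_boundary_dart {x | x ∈ p.support} p.start_mem_support hnot
  have h1' : d.fst ∈ p.support := h1
  have h2' : d.snd ∉ p.support := h2
  have hr : (Walk.cons d.adj.symm (p.rotate _ h1')).IsTrail := by
    rw [Walk.isTrail_cons]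
    refine ⟨(Walk.isTrail_rotate h1').2 hp, fun h => h2' ?_⟩
    have := Walk.fst_mem_support_of_mem_edges _ h
    rwa [Walk.mem_support_rotate_iff] at this
  have hre : G.Reachable v0 d.snd :=
    (hv.trans ⟨p.takeUntil _ h1'⟩).trans d.adj.reachable
  have := hmax _ _ _ hr hre
  simp at this

/-- Edge sets outside `K` with even degrees at the vertices outside `K`. -/
def EvenOut {V : Type*} (H : SimpleGraph V) (K : Set V) (D : SimpleGraph V) : Prop :=
  D ≤ H ∧ (∀ v, v ∉ K → Even (D.neighborSet v).ncard) ∧ ∀ a ∈ K, ∀ b ∈ K, ¬ D.Adj a b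

/-- Symmetric difference of graphs. -/
def gxor {V : Type*} (A B : SimpleGraph V) : SimpleGraph V where
  Adj a b := ¬ (A.Adj a b ↔ B.Adj a b)
  symm := ⟨fun a b h => by rwa [A.adj_comm, B.adj_comm] at h⟩
  loopless := ⟨fun a h => by simp at h⟩

theorem even_ncard_xor {V : Type*} [Finite V] (s t : Set V) (hs : Even s.ncard)
    (ht : Even t.ncard) : Even {x | ¬ (x ∈ s ↔ x ∈ t)}.ncard := by
  have h1 : {x | ¬ (x ∈ s ↔ x ∈ t)} = (s \ t) ∪ (t \ s) := by
    ext x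
    simp only [Set.mem_ofPred_eq, Set.mem_union, Set.mem_sdiff]
    tauto
  rw [h1, Set.ncard_union_eq (by
    rw [Set.disjoint_left]
    rintro x ⟨h, h'⟩ ⟨h2, h3⟩
    exact h' h2)]
  have h2 := Set.ncard_inter_add_ncard_sdiff_eq_ncard s t
  have h3 := Set.ncard_inter_add_ncard_sdiff_eq_ncard t s
  rw [Set.inter_comm] at h3
  grind

theorem EvenOut.gxor {V : Type*} [Finite V] {H : SimpleGraph V} {K : Set V} {A B : SimpleGraph V}
    (hA : EvenOut H K A) (hB : EvenOut H K B) : EvenOut H K (gxor A B) := by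
  refine ⟨?_, ?_, ?_⟩
  · intro a b h
    have h' : ¬ (A.Adj a b ↔ B.Adj a b) := h
    by_cases h1 : A.Adj a b
    · exact hA.1 h1
    · exact hB.1 (by tauto)
  · intro v hv
    exact even_ncard_xor _ _ (hA.2.1 v hv) (hB.2.1 v hv)
  · intro a ha b hb h
    exact h ⟨fun h => (hA.2.2 a ha b hb h).elim, fun h => (hB.2.2 a ha b hb h).elim⟩

theorem evenOut_of_cycle {V : Type*} [Finite V] {H : SimpleGraph V} {K : Set V} {x b : V}
    (hx : x ∉ K) (hxb : H.Adj x b) (hr : (H.deleteEdges {s(x, b)}).Reachable x b) :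
    ∃ D, EvenOut H K D ∧ D.Adj x b := by
  classical
  obtain ⟨u, p, hp, hmem⟩ := adj_and_reachable_delete_edges_iff_exists_cycle.mp ⟨hxb, hr⟩
  let D : SimpleGraph V :=
    { Adj := fun a c => p.toSubgraph.Adj a c ∧ ¬ (a ∈ K ∧ c ∈ K)
      symm := ⟨fun a c h => ⟨h.1.symm, fun h' => h.2 ⟨h'.2, h'.1⟩⟩⟩
      loopless := ⟨fun a h => h.1.ne rfl⟩ }
  refine ⟨D, ⟨?_, ?_, ?_⟩, ?_⟩
  · intro a c h
    exact h.1.adj_sub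
  · intro v hv
    have h1 : D.neighborSet v = p.toSubgraph.neighborSet v := by
      ext c
      change (p.toSubgraph.Adj v c ∧ ¬ (v ∈ K ∧ c ∈ K)) ↔ p.toSubgraph.Adj v c
      tauto
    rw [h1]
    by_cases hvs : v ∈ p.support
    · rw [hp.ncard_neighborSet_toSubgraph_eq_two hvs]
      exact even_two
    · have : p.toSubgraph.neighborSet v = ∅ := by
        ext c
        simp only [Set.mem_empty_iff_false, iff_false]
        intro h
        exact hvs (p.mem_verts_toSubgraph.mp (p.toSubgraph.edge_vert h))
      rw [this]
      simp
  · intro a ha c hc h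
    exact h.2 ⟨ha, hc⟩
  · refine ⟨?_, fun h => hx h.1⟩
    rwa [← Subgraph.mem_edgeSet, Walk.mem_edges_toSubgraph]

section main
set_option linter.unusedSectionVars false
variable {V : Type*} [Finite V] {H : SimpleGraph V} {K : Set V}

theorem touch_adj (hH : EssentiallyTwoEdgeConnected H) (hK : ∀ k ∈ K, ∃ k' ∈ K, H.Adj k k')
    {x a b k : V} (hx : x ∉ K) (hxb : H.Adj x b) (hxa : H.Adj x a) (hab : a ≠ b) (hk : k ∈ K)
    (hr : (H.deleteEdges {s(x, b)}).Reachable b k) : ∃ D, EvenOut H K D ∧ D.Adj x b := by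
  apply evenOut_of_cycle hx hxb
  obtain ⟨k', hk', hkk⟩ := hK k hk
  have h1 : s(x, a) ∈ (H.deleteEdges {s(x, b)}).edgeSet := by
    simp only [mem_edgeSet, deleteEdges_adj, Set.mem_singleton_iff, Sym2.eq_iff]
    refine ⟨hxa, ?_⟩
    rintro (⟨-, h⟩ | ⟨h, h'⟩)
    · exact hab h
    · exact hxa.ne h'.symm
  have h2 : s(k, k') ∈ (H.deleteEdges {s(x, b)}).edgeSet := by
    simp only [mem_edgeSet, deleteEdges_adj, Set.mem_singleton_iff, Sym2.eq_iff]
    refine ⟨hkk, ?_⟩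
    rintro (⟨h, -⟩ | ⟨-, h⟩)
    · exact hx (h ▸ hk)
    · exact hx (h ▸ hk')
  exact (hH.2 s(x, b) hxb _ h1 _ h2 x (by simp) k (by simp)).trans hr.symm

theorem touch_vertex (hH : EssentiallyTwoEdgeConnected H) (hK : ∀ k ∈ K, ∃ k' ∈ K, H.Adj k k')
    (hne : K.Nonempty) {x a c : V} (hx : x ∉ K) (hxa : H.Adj x a) (hxc : H.Adj x c) (hac : a ≠ c) :
    ∃ D, EvenOut H K D ∧ ∃ b, D.Adj x b := by
  classical
  obtain ⟨k, hk⟩ := hne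
  obtain ⟨p, hp⟩ := (hH.1.preconnected x k).exists_isPath
  cases p with
  | nil => exact (hx hk).elim
  | @cons _ b _ h p =>
    rw [Walk.cons_isPath_iff] at hp
    have hr : (H.deleteEdges {s(x, b)}).Reachable b k := by
      refine ⟨p.toDeleteEdges _ ?_⟩
      rintro e he rfl
      exact hp.2 (p.fst_mem_support_of_mem_edges he)
    have : ∃ a', H.Adj x a' ∧ a' ≠ b := by
      by_cases hab : a = b
      · exact ⟨c, hxc, fun h => hac (hab.trans h.symm)⟩
      · exact ⟨a, hxa, hab⟩
    obtain ⟨a', ha', hab⟩ := this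
    obtain ⟨D, hD, hb⟩ := touch_adj hH hK hx h ha' hab hk hr
    exact ⟨D, hD, b, hb⟩

theorem touch_edge (hH : EssentiallyTwoEdgeConnected H) (hK : ∀ k ∈ K, ∃ k' ∈ K, H.Adj k k')
    (hne : K.Nonempty) {x y : V} (hx : x ∉ K) (hy : y ∉ K) (hxy : H.Adj x y) :
    ∃ z ∈ s(x, y), ∃ D, EvenOut H K D ∧ ∃ b, D.Adj z b := by
  classical
  obtain ⟨k, hk⟩ := id hne
  obtain ⟨p, hp⟩ := (hH.1.preconnected x k).exists_isPath
  cases p with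
  | nil => exact (hx hk).elim
  | @cons _ b _ h p =>
    by_cases hb : b = y
    · subst hb
      cases p with
      | nil => exact (hy hk).elim
      | @cons _ c _ h' p =>
        refine ⟨b, by simp, touch_vertex hH hK hne hy hxy.symm h' ?_⟩
        rintro rfl
        rw [Walk.cons_isPath_iff] at hp
        exact hp.2 (by simp)
    · exact ⟨x, by simp, touch_vertex hH hK hne hx h hxy hb⟩

theorem touch_pair {A B : SimpleGraph V} (hA : EvenOut H K A) (hB : EvenOut H K B) {u v a b : V}
    (hu : A.Adj u a) (hv : B.Adj v b) :
    ∃ D, EvenOut H K D ∧ (∃ a, D.Adj u a) ∧ ∃ b, D.Adj v b := by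
  by_cases h1 : ∃ b, A.Adj v b
  · exact ⟨A, hA, ⟨a, hu⟩, h1⟩
  by_cases h2 : ∃ b, B.Adj u b
  · exact ⟨B, hB, h2, ⟨b, hv⟩⟩
  push Not at h1 h2
  refine ⟨gxor A B, hA.gxor hB, ⟨a, ?_⟩, ⟨b, ?_⟩⟩
  · exact fun h => h2 a (h.mp hu)
  · exact fun h => h1 b (h.mpr hv)

theorem second_nbr {D : SimpleGraph V} (hD : EvenOut H K D) {v a : V} (hv : v ∉ K)
    (ha : D.Adj v a) : ∃ c, c ≠ a ∧ D.Adj v c := by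
  by_contra! hcon
  have : D.neighborSet v = {a} := by
    ext c
    simp only [mem_neighborSet, Set.mem_singleton_iff]
    constructor
    · intro h
      by_contra hc
      exact hcon c hc h
    · rintro rfl
      exact ha
  have h2 := hD.2.1 v hv
  rw [this] at h2
  simp at h2

theorem four
    (hcard : ∀ s : Finset (Sym2 V), (∀ e ∈ s, e ∈ H.edgeSet ∧ ∀ v ∈ e, v ∉ K) → s.card ≤ 3)
    {a b c d : Sym2 V} (ha : a ∈ H.edgeSet ∧ ∀ v ∈ a, v ∉ K) (hb : b ∈ H.edgeSet ∧ ∀ v ∈ b, v ∉ K)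
    (hc : c ∈ H.edgeSet ∧ ∀ v ∈ c, v ∉ K) (hd : d ∈ H.edgeSet ∧ ∀ v ∈ d, v ∉ K)
    (hab : a ≠ b) (hac : a ≠ c) (had : a ≠ d) (hbc : b ≠ c) (hbd : b ≠ d) (hcd : c ≠ d) :
    False := by
  classical
  have h1 := hcard {a, b, c, d} (by
    simp only [Finset.mem_insert, Finset.mem_singleton]
    rintro g (rfl | rfl | rfl | rfl) <;> assumption)
  rw [Finset.card_insert_of_notMem (by simp [hab, hac, had]),
    Finset.card_insert_of_notMem (by simp [hbc, hbd]), Finset.card_pair hcd] at h1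
  omega

theorem exists_dom (hH : EssentiallyTwoEdgeConnected H) (hK : ∀ k ∈ K, ∃ k' ∈ K, H.Adj k k')
    (hne : K.Nonempty)
    (hcard : ∀ s : Finset (Sym2 V), (∀ e ∈ s, e ∈ H.edgeSet ∧ ∀ v ∈ e, v ∉ K) → s.card ≤ 3) :
    ∃ D, EvenOut H K D ∧
      ∀ e ∈ H.edgeSet, (∀ v ∈ e, v ∉ K) → ∃ v ∈ e, ∃ c, D.Adj v c := by
  classical
  have htouch : ∀ e ∈ H.edgeSet, (∀ v ∈ e, v ∉ K) →
      ∃ z ∈ e, ∃ D, EvenOut H K D ∧ ∃ b, D.Adj z b := by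
    intro e
    induction e with
    | _ x y =>
      intro he hv
      exact touch_edge hH hK hne (hv x (by simp)) (hv y (by simp)) he
  by_cases hadj : ∃ v a b, v ∉ K ∧ a ∉ K ∧ b ∉ K ∧ a ≠ b ∧ H.Adj v a ∧ H.Adj v b
  · obtain ⟨v, a, b, hv, ha, hb, hab, hva, hvb⟩ := hadj
    obtain ⟨A, hA, c, hc⟩ := touch_vertex hH hK hne hv hva hvb hab
    by_cases h3 : ∃ e ∈ H.edgeSet, (∀ v ∈ e, v ∉ K) ∧ v ∉ e
    · obtain ⟨e, he, heK, hve⟩ := h3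
      obtain ⟨z, hz, B, hB, d, hd⟩ := htouch e he heK
      obtain ⟨D, hD, hD1, hD2⟩ := touch_pair hA hB hc hd
      refine ⟨D, hD, fun f hf hfK => ?_⟩
      by_cases hvf : v ∈ f
      · exact ⟨v, hvf, hD1⟩
      · have hfe : f = e := by
          by_contra hfe
          have h4 : s(v, a) ≠ s(v, b) := by
            intro h
            rcases Sym2.eq_iff.mp h with ⟨-, h⟩ | ⟨h, h'⟩
            · exact hab h
            · exact hva.ne h'.symm
          have h5 : s(v, a) ≠ e := by
            rintro rfl
            simp at hve
          have h6 : s(v, b) ≠ e := by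
            rintro rfl
            simp at hve
          have h7 : s(v, a) ≠ f := by
            rintro rfl
            simp at hvf
          have h8 : s(v, b) ≠ f := by
            rintro rfl
            simp at hvf
          exact four hcard ⟨hva, by simp [hv, ha]⟩ ⟨hvb, by simp [hv, hb]⟩ ⟨he, heK⟩ ⟨hf, hfK⟩
            h4 h5 h7 h6 h8 (Ne.symm hfe)
        subst hfe
        exact ⟨z, hz, hD2⟩
    · push Not at h3
      exact ⟨A, hA, fun f hf hfK => ⟨v, h3 f hf hfK, c, hc⟩⟩
  · have huniq : ∀ v a b, v ∉ K → a ∉ K → b ∉ K → H.Adj v a → H.Adj v b → a = b := by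
      intro v a b hv ha hb hva hvb
      by_contra hab
      exact hadj ⟨v, a, b, hv, ha, hb, hab, hva, hvb⟩
    have : Nonempty V := ⟨hne.some⟩
    choose! z hz Dz hDz b hb using htouch
    -- the outer edge containing a vertex is unique
    have huniq' : ∀ e ∈ H.edgeSet, (∀ v ∈ e, v ∉ K) → ∀ f ∈ H.edgeSet, (∀ v ∈ f, v ∉ K) →
        ∀ v ∈ e, v ∈ f → e = f := by
      intro e he heK f hf hfK v hve hvf
      obtain ⟨x, rfl⟩ := Sym2.mem_iff_exists.mp hve
      obtain ⟨y, rfl⟩ := Sym2.mem_iff_exists.mp hvf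
      rw [huniq v x y (heK v (by simp)) (heK x (by simp)) (hfK y (by simp)) he hf]
    let D : SimpleGraph V :=
      { Adj := fun p q => ∃ e ∈ H.edgeSet, (∀ v ∈ e, v ∉ K) ∧ (p ∈ e ∨ q ∈ e) ∧ (Dz e).Adj p q
        symm := ⟨fun p q ⟨e, h1, h2, h3, h4⟩ => ⟨e, h1, h2, h3.symm, h4.symm⟩⟩
        loopless := ⟨fun p ⟨e, h1, h2, h3, h4⟩ => h4.ne rfl⟩ }
    refine ⟨D, ⟨?_, ?_, ?_⟩, ?_⟩
    · rintro p q ⟨e, h1, h2, h3, h4⟩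
      exact (hDz e h1 h2).1 h4
    · intro v hv
      -- any D-edge at v coming from e has v in e
      have key : ∀ w e, e ∈ H.edgeSet → (∀ v ∈ e, v ∉ K) → (v ∈ e ∨ w ∈ e) → (Dz e).Adj v w →
          v ∈ e := by
        rintro w e h1 h2 (h3 | h3) h4
        · exact h3
        · have hvw : s(v, w) = e := by
            refine huniq' _ ((hDz e h1 h2).1 h4) ?_ e h1 h2 w (by simp) h3
            intro t ht
            rcases Sym2.mem_iff.mp ht with rfl | rfl
            · exact hv
            · exact h2 _ h3
          rw [← hvw]
          simp
      by_cases hex : ∃ e ∈ H.edgeSet, (∀ v ∈ e, v ∉ K) ∧ v ∈ e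
      · obtain ⟨e, he, heK, hve⟩ := hex
        have : D.neighborSet v = (Dz e).neighborSet v := by
          ext w
          constructor
          · rintro ⟨f, h1, h2, h3, h4⟩
            have hvf := key w f h1 h2 h3 h4
            have : e = f := huniq' e he heK f h1 h2 v hve hvf
            subst this
            exact h4
          · intro h
            exact ⟨e, he, heK, Or.inl hve, h⟩
        rw [this]
        exact (hDz e he heK).2.1 v hv
      · have : D.neighborSet v = ∅ := by
          ext w
          simp only [Set.mem_empty_iff_false, iff_false]
          rintro ⟨f, h1, h2, h3, h4⟩
          exact hex ⟨f, h1, h2, key w f h1 h2 h3 h4⟩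
        rw [this]
        simp
    · rintro p hp q hq ⟨e, h1, h2, h3, h4⟩
      exact (hDz e h1 h2).2.2 p hp q hq h4
    · intro e he heK
      exact ⟨z e, hz e he heK, b e, e, he, heK, Or.inl (hz e he heK), hb e he heK⟩

theorem conn_or_triangle
    (hcard : ∀ s : Finset (Sym2 V), (∀ e ∈ s, e ∈ H.edgeSet ∧ ∀ v ∈ e, v ∉ K) → s.card ≤ 3)
    {D : SimpleGraph V} (hD : EvenOut H K D) {u c : V} (hu : u ∉ K) (huc : D.Adj u c)
    (hno : ∀ k ∈ K, ¬ D.Reachable u k) :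
    ∃ p q, p ∉ K ∧ q ∉ K ∧ D.Adj u p ∧ D.Adj u q ∧ D.Adj p q ∧
      ∀ e ∈ H.edgeSet, (∀ v ∈ e, v ∉ K) → e = s(u, p) ∨ e = s(u, q) ∨ e = s(p, q) := by
  obtain ⟨q, hqc, huq⟩ := second_nbr hD hu huc
  have hcK : c ∉ K := fun h => hno c h huc.reachable
  have hqK : q ∉ K := fun h => hno q h huq.reachable
  obtain ⟨r, hru, hcr⟩ := second_nbr hD hcK huc.symm
  obtain ⟨r', hru', hqr⟩ := second_nbr hD hqK huq.symm
  have hrK : r ∉ K := fun h => hno r h (huc.reachable.trans hcr.reachable)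
  have hrK' : r' ∉ K := fun h => hno r' h (huq.reachable.trans hqr.reachable)
  have e1 : s(u, c) ∈ H.edgeSet ∧ ∀ v ∈ s(u, c), v ∉ K := ⟨hD.1 huc, by simp [hu, hcK]⟩
  have e2 : s(u, q) ∈ H.edgeSet ∧ ∀ v ∈ s(u, q), v ∉ K := ⟨hD.1 huq, by simp [hu, hqK]⟩
  have e3 : s(c, r) ∈ H.edgeSet ∧ ∀ v ∈ s(c, r), v ∉ K := ⟨hD.1 hcr, by simp [hcK, hrK]⟩
  have e4 : s(q, r') ∈ H.edgeSet ∧ ∀ v ∈ s(q, r'), v ∉ K := ⟨hD.1 hqr, by simp [hqK, hrK']⟩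
  have n1 := huc.ne
  have n2 := huq.ne
  have h12 : s(u, c) ≠ s(u, q) := by rw [Ne, Sym2.eq_iff]; grind
  have h13 : s(u, c) ≠ s(c, r) := by rw [Ne, Sym2.eq_iff]; grind
  have h14 : s(u, c) ≠ s(q, r') := by rw [Ne, Sym2.eq_iff]; grind
  have h23 : s(u, q) ≠ s(c, r) := by rw [Ne, Sym2.eq_iff]; grind
  have h24 : s(u, q) ≠ s(q, r') := by rw [Ne, Sym2.eq_iff]; grind
  have h34 : s(c, r) = s(q, r') := by
    by_contra h34
    exact four hcard e1 e2 e3 e4 h12 h13 h14 h23 h24 h34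
  have hrq : r = q := by
    rw [Sym2.eq_iff] at h34
    grind
  subst hrq
  refine ⟨c, r, hcK, hqK, huc, huq, hcr, ?_⟩
  intro e he heK
  by_contra! hcon
  exact four hcard e1 e2 e3 ⟨he, heK⟩ h12 h13 (Ne.symm hcon.1) h23 (Ne.symm hcon.2.1)
    (Ne.symm hcon.2.2)

theorem exists_conn (hH : EssentiallyTwoEdgeConnected H) (hK : ∀ k ∈ K, ∃ k' ∈ K, H.Adj k k')
    (hne : K.Nonempty)
    (hcard : ∀ s : Finset (Sym2 V), (∀ e ∈ s, e ∈ H.edgeSet ∧ ∀ v ∈ e, v ∉ K) → s.card ≤ 3) :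
    ∃ D, EvenOut H K D ∧
      (∀ e ∈ H.edgeSet, (∀ v ∈ e, v ∉ K) → ∃ v ∈ e, ∃ c, D.Adj v c) ∧
      ∀ u, u ∉ K → (∃ c, D.Adj u c) → ∃ k ∈ K, D.Reachable u k := by
  classical
  obtain ⟨D, hD, hdom⟩ := exists_dom hH hK hne hcard
  by_cases hconn : ∀ u, u ∉ K → (∃ c, D.Adj u c) → ∃ k ∈ K, D.Reachable u k
  · exact ⟨D, hD, hdom, hconn⟩
  push Not at hconn
  obtain ⟨u, hu, ⟨c, huc⟩, hno⟩ := hconn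
  obtain ⟨p, q, hp, hq, hup', huq', hpq', htri⟩ := conn_or_triangle hcard hD hu huc hno
  have hup := hD.1 hup'
  have huq := hD.1 huq'
  have hpq := hD.1 hpq'
  let t : Set V := {u, p, q}
  have htK : ∀ x ∈ t, x ∉ K := by
    rintro x (rfl | rfl | rfl) <;> assumption
  have htH : ∀ x ∈ t, ∀ y ∈ t, x ≠ y → H.Adj x y := by
    rintro x (rfl | rfl | rfl) y (rfl | rfl | rfl) hxy
    all_goals first | exact (hxy rfl).elim | assumption | (apply SimpleGraph.Adj.symm; assumption)
  have htcard : t.ncard = 3 := by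
    rw [Set.ncard_eq_three]
    exact ⟨u, p, q, hup.ne, huq.ne, hpq.ne, rfl⟩
  -- outer edges lie in the triangle
  have htout : ∀ x y, H.Adj x y → x ∉ K → y ∉ K → x ∈ t ∧ y ∈ t := by
    intro x y hxy hx hy
    have := htri s(x, y) hxy (by simp [hx, hy])
    simp only [Sym2.eq_iff] at this
    simp only [t, Set.mem_insert_iff, Set.mem_singleton_iff]
    tauto
  -- a contact edge
  obtain ⟨k0, hk0⟩ := id hne
  obtain ⟨w⟩ := hH.1.preconnected u k0
  obtain ⟨d, -, hd1, hd2⟩ := w.exists_boundary_dart t (by simp [t]) (fun h => htK _ h hk0)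
  obtain ⟨⟨a, k⟩, hak⟩ := d
  have hd1 : a ∈ t := hd1
  have hd2 : k ∉ t := hd2
  have hak : H.Adj a k := hak
  have haK := htK a hd1
  have hkK : k ∈ K := by
    by_contra hk
    exact hd2 (htout a k hak haK hk).2
  have hother : ∃ b ∈ t, b ≠ a := by
    by_cases h : u = a
    · exact ⟨p, by simp [t], fun h' => hup.ne (h.trans h'.symm)⟩
    · exact ⟨u, by simp [t], h⟩
  obtain ⟨b, hbt, hba⟩ := hother
  have hab := htH a hd1 b hbt hba.symm
  obtain ⟨A, hA, hAak⟩ := touch_adj hH hK haK hak hab (fun h => hd2 (h ▸ hbt)) hkK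
    (Reachable.refl _)
  let T : SimpleGraph V :=
    { Adj := fun x y => x ≠ y ∧ x ∈ t ∧ y ∈ t
      symm := ⟨fun x y h => ⟨h.1.symm, h.2.2, h.2.1⟩⟩
      loopless := ⟨fun x h => h.1 rfl⟩ }
  have hT : EvenOut H K T := by
    refine ⟨fun x y h => htH x h.2.1 y h.2.2 h.1, ?_, fun x hx y hy h => htK x h.2.1 hx⟩
    intro v hv
    by_cases hvt : v ∈ t
    · have : T.neighborSet v = t \ {v} := by
        ext y
        change (v ≠ y ∧ v ∈ t ∧ y ∈ t) ↔ y ∈ t ∧ y ≠ v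
        exact ⟨fun h => ⟨h.2.2, h.1.symm⟩, fun h => ⟨h.2.symm, hvt, h.1⟩⟩
      rw [this, Set.ncard_sdiff_singleton_of_mem hvt, htcard]
      exact even_two
    · have : T.neighborSet v = ∅ := by
        ext y
        simp only [Set.mem_empty_iff_false, iff_false]
        exact fun h => hvt h.2.1
      rw [this]
      simp
  have hB : ∃ B, EvenOut H K B ∧ B.Adj a k ∧ ∃ x ∈ t, ∃ y ∈ t, x ≠ y ∧ B.Adj x y := by
    by_cases h : ∃ x ∈ t, ∃ y ∈ t, x ≠ y ∧ A.Adj x y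
    · exact ⟨A, hA, hAak, h⟩
    · refine ⟨gxor A T, hA.gxor hT, ?_, u, by simp [t], p, by simp [t], hup.ne, ?_⟩
      · exact fun h' => hd2 (h'.mp hAak).2.2
      · intro h'
        exact h ⟨u, by simp [t], p, by simp [t], hup.ne,
          h'.mpr ⟨hup.ne, by simp [t], by simp [t]⟩⟩
  obtain ⟨B, hB, hBak, x, hx, y, hy, hxy, hBxy⟩ := hB
  refine ⟨B, hB, ?_, ?_⟩
  · intro e he heK
    have hxy' : x ∈ e ∨ y ∈ e := by
      simp only [t, Set.mem_insert_iff, Set.mem_singleton_iff] at hx hy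
      rcases htri e he heK with rfl | rfl | rfl <;> simp only [Sym2.mem_iff] <;> grind
    rcases hxy' with h | h
    · exact ⟨x, h, y, hBxy⟩
    · exact ⟨y, h, x, hBxy.symm⟩
  · rintro v hv ⟨c', hvc⟩
    by_contra! hcon
    obtain ⟨p', q', -, -, h1, h2, -, h3⟩ := conn_or_triangle hcard hB hv hvc hcon
    have h4 := h3 s(a, b) hab (by simp [haK, htK b hbt])
    have h5 : a = v ∨ a = p' ∨ a = q' := by
      simp only [Sym2.eq_iff] at h4
      tauto
    apply hcon k hkK
    rcases h5 with rfl | rfl | rfl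
    · exact hBak.reachable
    · exact h1.reachable.trans hBak.reachable
    · exact h2.reachable.trans hBak.reachable

end main

end DCTProof

/-- If `H` is essentially 2-edge-connected, `Ξ` is a collapsible subgraph of `H`,
and deleting the vertices of `Ξ` from `H` leaves at most 3 edges, then `H` has a
dominating closed trail. -/
theorem dct_of_collapsible_subgraph {V : Type*} [Fintype V] (H : SimpleGraph V)
    (hH : EssentiallyTwoEdgeConnected H) (Ξ : H.Subgraph)
    (hcol : Collapsible Ξ.coe)
    (hfew : ((H.induce Ξ.vertsᶜ).edgeSet).ncard ≤ 3) :
    ∃ (v : V) (w : H.Walk v v), IsDCT H w := by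
  classical
  set K : Set V := Ξ.verts with hKdef
  have hfinW : Finite Ξ.verts := inferInstance
  have hnontriv : Nontrivial Ξ.verts := by
    rw [← Finite.one_lt_card_iff_nontrivial]
    exact hcol.1
  have hne : K.Nonempty := by
    obtain ⟨x⟩ : Nonempty Ξ.verts := inferInstance
    exact ⟨x, x.2⟩
  have hK : ∀ k ∈ K, ∃ k' ∈ K, H.Adj k k' := by
    intro k hk
    obtain ⟨F, hF, hFc, -⟩ := hcol.2 ∅ Set.finite_empty (by simp)
    obtain ⟨x, hx⟩ := hFc.preconnected.exists_adj_of_nontrivial ⟨k, hk⟩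
    have h2 : Ξ.Adj k x := hF hx
    exact ⟨x, x.2, h2.adj_sub⟩
  have hcard : ∀ s : Finset (Sym2 V), (∀ e ∈ s, e ∈ H.edgeSet ∧ ∀ v ∈ e, v ∉ K) →
      s.card ≤ 3 := by
    intro s hs
    have hsub : (s : Set (Sym2 V)) ⊆
        Sym2.map (Subtype.val : ↥(Kᶜ) → V) '' (H.induce Kᶜ).edgeSet := by
      intro e he
      obtain ⟨h1, h2⟩ := hs e he
      induction e with
      | _ x y =>
        exact ⟨s(⟨x, h2 x (by simp)⟩, ⟨y, h2 y (by simp)⟩), h1, rfl⟩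
    calc s.card = (s : Set (Sym2 V)).ncard := (Set.ncard_coe_finset s).symm
      _ ≤ _ := Set.ncard_le_ncard hsub (Set.toFinite _)
      _ ≤ _ := Set.ncard_image_le (Set.toFinite _)
      _ ≤ 3 := hfew
  obtain ⟨D, hD, hdom, hconn⟩ := DCTProof.exists_conn hH hK hne hcard
  -- the odd vertices of `D`
  let S : Set Ξ.verts := {x | Odd (D.neighborSet x.1).ncard}
  have hS : Even S.ncard := by
    have h1 := D.even_card_odd_degree_vertices
    have h2 : (Subtype.val '' S : Set V) =
        ((Finset.univ.filter fun v => Odd (D.degree v) : Finset V) : Set V) := by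
      ext v
      have hdeg : D.degree v = (D.neighborSet v).ncard := by
        rw [← card_neighborSet_eq_degree, ← Set.toFinset_card, ← Set.ncard_eq_toFinset_card']
      simp only [Finset.coe_filter, Finset.mem_univ, true_and, Set.mem_ofPred_eq, hdeg]
      constructor
      · rintro ⟨x, hx, rfl⟩
        exact hx
      · intro hv
        have hvK : v ∈ K := by
          by_contra hvK
          exact (Nat.not_even_iff_odd.mpr hv) (hD.2.1 v hvK)
        exact ⟨⟨v, hvK⟩, hv, rfl⟩
    rw [← Set.ncard_image_of_injective S Subtype.val_injective, h2, Set.ncard_coe_finset]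
    exact h1
  obtain ⟨F, hF, hFc, hFodd⟩ := hcol.2 S (Set.toFinite _) hS
  let F' : SimpleGraph V := F.map (Function.Embedding.subtype _)
  have hF'adj : ∀ a b, F'.Adj a b → a ∈ K ∧ b ∈ K := by
    rintro a b h
    obtain ⟨x, y, -, rfl, rfl⟩ := (SimpleGraph.map_adj _ _ _ _).mp h
    exact ⟨x.2, y.2⟩
  have hF'H : F' ≤ H := by
    intro a b h
    obtain ⟨x, y, hxy, rfl, rfl⟩ := (SimpleGraph.map_adj _ _ _ _).mp h
    have h2 : Ξ.Adj x y := hF hxy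
    exact h2.adj_sub
  let G : SimpleGraph V := F' ⊔ D
  have hGH : G ≤ H := sup_le hF'H hD.1
  have heven : ∀ v, Even (G.neighborSet v).ncard := by
    intro v
    by_cases hv : v ∈ K
    · have h1 : G.neighborSet v = Subtype.val '' (F.neighborSet ⟨v, hv⟩) ∪ D.neighborSet v := by
        ext y
        constructor
        · rintro (h | h)
          · obtain ⟨x, y, hxy, rfl, rfl⟩ := (SimpleGraph.map_adj _ _ _ _).mp h
            exact Or.inl ⟨y, hxy, rfl⟩
          · exact Or.inr h
        · rintro (⟨y, hy, rfl⟩ | h)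
          · exact Or.inl ((SimpleGraph.map_adj _ _ _ _).mpr ⟨⟨v, hv⟩, y, hy, rfl, rfl⟩)
          · exact Or.inr h
      have hdisj : Disjoint (Subtype.val '' (F.neighborSet ⟨v, hv⟩)) (D.neighborSet v) := by
        rw [Set.disjoint_left]
        rintro _ ⟨y, hy, rfl⟩ h
        exact hD.2.2 v hv y y.2 h
      rw [h1, Set.ncard_union_eq hdisj, Set.ncard_image_of_injective _ Subtype.val_injective]
      have h3 : Odd (F.neighborSet ⟨v, hv⟩).ncard ↔ Odd (D.neighborSet v).ncard :=
        hFodd ⟨v, hv⟩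
      rw [Nat.even_add, ← Nat.not_odd_iff_even, ← Nat.not_odd_iff_even, h3]
    · have h1 : G.neighborSet v = D.neighborSet v := by
        ext y
        constructor
        · rintro (h | h)
          · exact (hv (hF'adj _ _ h).1).elim
          · exact h
        · exact fun h => Or.inr h
      rw [h1]
      exact hD.2.1 v hv
  obtain ⟨k0, hk0⟩ := id hne
  have hKr : ∀ k ∈ K, G.Reachable k0 k := by
    intro k hk
    have h1 := (hFc.preconnected ⟨k0, hk0⟩ ⟨k, hk⟩).map
      (SimpleGraph.Embedding.map (Function.Embedding.subtype _) F).toHom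
    exact h1.mono le_sup_left
  obtain ⟨v, w, hw, hsupp⟩ := DCTProof.euler G heven k0
  refine ⟨v, w.mapLe hGH, (Walk.isTrail_mapLe hGH).mpr hw, ?_⟩
  intro e he
  rw [Walk.support_mapLe_eq_support]
  by_cases hKe : ∃ x ∈ e, x ∈ K
  · obtain ⟨x, hx, hxK⟩ := hKe
    exact ⟨x, hsupp x (hKr x hxK), hx⟩
  · push Not at hKe
    obtain ⟨x, hx, hc⟩ := hdom e he hKe
    obtain ⟨k, hk, hr⟩ := hconn x (hKe x hx) hc
    exact ⟨x, hsupp x ((hKr k hk).trans (hr.mono le_sup_right).symm), hx⟩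
end

section
/- The graph K_{3,3}^-, obtained from the complete bipartite graph K_{3,3} by deleting one edge, is collapsible. -/
open SimpleGraph

def kConn (M : Fin 3 → Fin 3 → Bool) : Prop :=
  (∀ y, ∃ x, M x y = true) ∧
  (∀ x x', ∃ z, (∃ y, M x y = true ∧ M z y = true) ∧ (∃ y, M z y = true ∧ M x' y = true))

instance (M : Fin 3 → Fin 3 → Bool) : Decidable (kConn M) := by
  unfold kConn; infer_instance

def kN (a0 a1 b0 b1 b2 p q r : Bool) : Fin 3 → Fin 3 → Bool :=
  ![![false, p, a0 ^^ p], ![q, r, a1 ^^ q ^^ r],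
    ![b0 ^^ q, b1 ^^ p ^^ r, b2 ^^ a0 ^^ p ^^ a1 ^^ q ^^ r]]

theorem k_core0 : ∀ a0 a1 b0 b1 b2 : Bool, ∃ p q r : Bool,
    kConn (kN a0 a1 b0 b1 b2 p q r) := by
  decide +kernel

theorem k_core (a b : Fin 3 → Bool) (h : (a 0 ^^ a 1 ^^ a 2 ^^ b 0 ^^ b 1 ^^ b 2) = false) :
    ∃ N : Fin 3 → Fin 3 → Bool, N 0 0 = false ∧ kConn N ∧
      (∀ x, (N x 0 ^^ N x 1 ^^ N x 2) = a x) ∧ (∀ y, (N 0 y ^^ N 1 y ^^ N 2 y) = b y) := by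
  obtain ⟨p, q, r, hc⟩ := k_core0 (a 0) (a 1) (b 0) (b 1) (b 2)
  refine ⟨_, rfl, hc, ?_, ?_⟩
  · clear hc
    intro x
    fin_cases x <;> simp [kN] <;> revert h <;>
    generalize a 0 = a0 <;> generalize a 1 = a1 <;> generalize a 2 = a2 <;>
    generalize b 0 = b0 <;> generalize b 1 = b1 <;> generalize b 2 = b2 <;>
    revert a0 a1 a2 b0 b1 b2 p q r <;> decide +kernel
  · clear hc
    intro x
    fin_cases x <;> simp [kN] <;> revert h <;>
    generalize a 0 = a0 <;> generalize a 1 = a1 <;> generalize a 2 = a2 <;>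
    generalize b 0 = b0 <;> generalize b 1 = b1 <;> generalize b 2 = b2 <;>
    revert a0 a1 a2 b0 b1 b2 p q r <;> decide +kernel

theorem k_xor_shift (f : Fin 3 → Bool) (i : Fin 3) :
    (f (0 + i) ^^ f (1 + i) ^^ f (2 + i)) = (f 0 ^^ f 1 ^^ f 2) := by
  have h3 : (2 : Fin 3) + 1 = 0 := rfl
  have h4 : (2 : Fin 3) + 2 = 1 := rfl
  have h5 : (1 : Fin 3) + 2 = 0 := rfl
  have h6 : (1 : Fin 3) + 1 = 2 := rfl
  fin_cases i <;> simp [h3, h4, h5, h6] <;>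
    generalize f 0 = a0 <;> generalize f 1 = a1 <;> generalize f 2 = a2 <;>
    revert a0 a1 a2 <;> decide

theorem k_core_shift (i j : Fin 3) (a b : Fin 3 → Bool)
    (h : (a 0 ^^ a 1 ^^ a 2 ^^ b 0 ^^ b 1 ^^ b 2) = false) :
    ∃ M : Fin 3 → Fin 3 → Bool, M i j = false ∧ kConn M ∧
      (∀ x, (M x 0 ^^ M x 1 ^^ M x 2) = a x) ∧ (∀ y, (M 0 y ^^ M 1 y ^^ M 2 y) = b y) := by
  obtain ⟨N, h0, ⟨hc1, hc2⟩, hr, hc⟩ := k_core (fun x => a (x + i)) (fun y => b (y + j)) (by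
    have h1 := k_xor_shift a i
    have h2 := k_xor_shift b j
    simp only [Bool.xor_assoc] at *
    rw [h2, ← h, ← Bool.xor_assoc, ← Bool.xor_assoc, Bool.xor_assoc (a _), h1]
    simp only [Bool.xor_assoc])
  refine ⟨fun x y => N (x - i) (y - j), by simpa using h0, ⟨?_, ?_⟩, ?_, ?_⟩
  · intro y
    obtain ⟨x, hx⟩ := hc1 (y - j)
    exact ⟨x + i, by simpa using hx⟩
  · intro x x'
    obtain ⟨z, ⟨y, h1, h2⟩, ⟨y', h3, h4⟩⟩ := hc2 (x - i) (x' - i)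
    exact ⟨z + i, ⟨y + j, by simpa using h1, by simpa using h2⟩,
      ⟨y' + j, by simpa using h3, by simpa using h4⟩⟩
  · intro x
    have := k_xor_shift (fun y => N (x - i) (y - j)) j
    simp only [add_sub_cancel_right, hr, sub_add_cancel] at this
    exact this.symm
  · intro y
    have := k_xor_shift (fun x => N (x - i) (y - j)) i
    simp only [add_sub_cancel_right, hc, sub_add_cancel] at this
    exact this.symm

def kG (M : Fin 3 → Fin 3 → Bool) : SimpleGraph (Fin 3 ⊕ Fin 3) where
  Adj u v := match u, v with
    | .inl x, .inr y => M x y = true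
    | .inr y, .inl x => M x y = true
    | _, _ => False
  symm := ⟨by rintro (x | x) (y | y) h <;> exact h⟩
  loopless := ⟨by rintro (x | x) h <;> exact h⟩

theorem kG_conn (M : Fin 3 → Fin 3 → Bool) (h : kConn M) : (kG M).Connected := by
  have e : ∀ x y, M x y = true → (kG M).Reachable (.inl x) (.inr y) := fun x y hxy =>
    SimpleGraph.Adj.reachable (show (kG M).Adj (.inl x) (.inr y) from hxy)
  have l : ∀ x x', (kG M).Reachable (.inl x) (.inl x') := by
    intro x x'
    obtain ⟨z, ⟨y, h1, h2⟩, ⟨y', h3, h4⟩⟩ := h.2 x x'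
    exact ((e _ _ h1).trans (e _ _ h2).symm).trans ((e _ _ h3).trans (e _ _ h4).symm)
  have a : ∀ v, (kG M).Reachable (.inl 0) v := by
    rintro (x | y)
    · exact l _ _
    · obtain ⟨x, hx⟩ := h.1 y
      exact (l 0 x).trans (e _ _ hx)
  exact ⟨fun u v => (a u).symm.trans (a v)⟩

theorem k_odd (f : Fin 3 → Bool) :
    Odd ({y | f y = true} : Set (Fin 3)).ncard ↔ (f 0 ^^ f 1 ^^ f 2) = true := by
  have : ({y | f y = true} : Set (Fin 3)) = ((Finset.univ.filter fun y => f y = true : Finset (Fin 3)) : Set (Fin 3)) := by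
    ext; simp
  rw [this, Set.ncard_coe_finset, Finset.card_filter, Fin.sum_univ_three]
  generalize f 0 = a0; generalize f 1 = a1; generalize f 2 = a2
  revert a0 a1 a2; decide

theorem k_even (S : Set (Fin 3 ⊕ Fin 3)) (a b : Fin 3 → Bool)
    (ha : ∀ x, a x = true ↔ Sum.inl x ∈ S) (hb : ∀ x, b x = true ↔ Sum.inr x ∈ S)
    (h : Even S.ncard) : (a 0 ^^ a 1 ^^ a 2 ^^ b 0 ^^ b 1 ^^ b 2) = false := by
  have : S = ((Finset.univ.filter fun v => Sum.elim a b v = true : Finset (Fin 3 ⊕ Fin 3)) : Set _) := by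
    ext v; rcases v with v | v <;> simp [ha, hb]
  rw [this, Set.ncard_coe_finset, Finset.card_filter, Fintype.sum_sum_type, Fin.sum_univ_three,
    Fin.sum_univ_three] at h
  simp only [Sum.elim_inl, Sum.elim_inr] at h
  clear this ha hb
  rcases h0 : a 0 <;> rcases h1 : a 1 <;> rcases h2 : a 2 <;> rcases h3 : b 0 <;>
    rcases h4 : b 1 <;> rcases h5 : b 2 <;> simp [h0, h1, h2, h3, h4, h5] at h ⊢ <;>
    revert h <;> decide

theorem k_main (i j : Fin 3) (Ξ : SimpleGraph (Fin 3 ⊕ Fin 3))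
    (hΞ : ∀ x y, ¬ (x = i ∧ y = j) → Ξ.Adj (.inl x) (.inr y)) : Collapsible Ξ := by
  classical
  refine ⟨by simp, fun S _ hS => ?_⟩
  obtain ⟨a, ha⟩ : ∃ a : Fin 3 → Bool, ∀ x, a x = true ↔ Sum.inl x ∈ S :=
    ⟨fun x => decide (Sum.inl x ∈ S), fun x => decide_eq_true_iff⟩
  obtain ⟨b, hb⟩ : ∃ b : Fin 3 → Bool, ∀ x, b x = true ↔ Sum.inr x ∈ S :=
    ⟨fun x => decide (Sum.inr x ∈ S), fun x => decide_eq_true_iff⟩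
  obtain ⟨M, h0, hc, hr, hcol⟩ := k_core_shift i j a b (k_even S a b ha hb hS)
  have key : ∀ x y, M x y = true → Ξ.Adj (.inl x) (.inr y) := by
    intro x y hxy
    apply hΞ
    rintro ⟨rfl, rfl⟩
    simp [h0] at hxy
  refine ⟨kG M, ?_, kG_conn M hc, ?_⟩
  · rintro (x | x) (y | y) h
    · exact h.elim
    · exact key _ _ h
    · exact (key _ _ h).symm
    · exact h.elim
  · rintro (x | y)
    · have : (kG M).neighborSet (.inl x) = Sum.inr '' {y | M x y = true} := by
        ext v; rcases v with v | v <;> simp [kG]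
      rw [this, Set.ncard_image_of_injective _ Sum.inr_injective, k_odd, hr, ha]
    · have : (kG M).neighborSet (.inr y) = Sum.inl '' {x | M x y = true} := by
        ext v; rcases v with v | v <;> simp [kG]
      rw [this, Set.ncard_image_of_injective _ Sum.inl_injective, k_odd (fun x => M x y), hcol, hb]

/-- `K_{3,3}` minus any one edge is collapsible. -/
theorem k33_minus_edge_collapsible :
    ∀ e ∈ (completeBipartiteGraph (Fin 3) (Fin 3)).edgeSet,
      Collapsible ((completeBipartiteGraph (Fin 3) (Fin 3)).deleteEdges {e}) := by
  intro e
  induction e using Sym2.ind with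
  | _ u v =>
    intro he
    rcases u with i | i <;> rcases v with j | j
    · simp at he
    · apply k_main i j
      intro x y h
      simpa using h
    · apply k_main j i
      intro x y h
      simp
      tauto
    · simp at he
end

section
/- Let H be an essentially 2-edge-connected triangle-free simple graph with n = |E(H)| that does not contain a dominating closed trail. If {e1, e2, e3} is a matching of H (three pairwise nonadjacent edges), then ed(e1) + ed(e2) + ed(e3) ≤ n + 1. -/
open SimpleGraph

/-- The edge-degree of `e` in `H`: the number of edges of `H` other than `e`
sharing an endpoint with `e`. -/
noncomputable def edgeDeg {V : Type*} (H : SimpleGraph V) (e : Sym2 V) : ℕ :=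
  {f | f ∈ H.edgeSet ∧ f ≠ e ∧ ∃ v, v ∈ f ∧ v ∈ e}.ncard

/-- Two edges are nonadjacent if they share no endpoint. -/
def EdgesNonadj {V : Type*} (e f : Sym2 V) : Prop :=
  ∀ v, v ∈ e → v ∉ f

section Aux
variable {V : Type*} {H : SimpleGraph V}

lemma aux_no_tri (htf : H.CliqueFree 3) {a b c : V} (h1 : H.Adj a b) (h2 : H.Adj a c)
    (h3 : H.Adj b c) : False := by
  classical
  exact htf {a, b, c} (is3Clique_triple_iff.2 ⟨h1, h2, h3⟩)

lemma aux_perm (p q r : V) : [p, r, q].Perm [p, q, r] ∧ [q, p, r].Perm [p, q, r] ∧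
    [q, r, p].Perm [p, q, r] ∧ [r, p, q].Perm [p, q, r] ∧ [r, q, p].Perm [p, q, r] ∧
    [p, q, r].Perm [p, q, r] := by
  have h1 : ∀ a b c : V, [a, c, b].Perm [a, b, c] := fun a b c => .cons _ (.swap _ _ _)
  have h2 : ∀ a b c : V, [b, a, c].Perm [a, b, c] := fun a b c => .swap _ _ _
  exact ⟨h1 _ _ _, h2 _ _ _, (h1 _ _ _).trans (h2 _ _ _), (h2 _ _ _).trans (h1 _ _ _),
    (h1 _ _ _).trans ((h2 _ _ _).trans (h1 _ _ _)), .refl _⟩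

/-- spanning trails in a six-vertex complete bipartite graph, same side -/
lemma aux_same {p q r u v w : V} (nd : [p, q, r, u, v, w].Nodup)
    (pu : H.Adj p u) (qu : H.Adj q u) (qv : H.Adj q v) (qw : H.Adj q w)
    (rv : H.Adj r v) (rw' : H.Adj r w) :
    ∃ T : H.Walk q p, T.IsTrail ∧ ∀ z, z ∈ T.support ↔ z ∈ [p, q, r, u, v, w] := by
  refine ⟨.cons qv (.cons rv.symm (.cons rw' (.cons qw.symm (.cons qu (.cons pu.symm .nil))))),
    ?_, ?_⟩
  · simp [Walk.isTrail_def] at nd ⊢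
    grind
  · intro z; simp; tauto

lemma aux_opp {p q r u v w : V} (nd : [p, q, r, u, v, w].Nodup)
    (pv : H.Adj p v) (qv : H.Adj q v) (qw : H.Adj q w)
    (rw' : H.Adj r w) (ru : H.Adj r u) :
    ∃ T : H.Walk p u, T.IsTrail ∧ ∀ z, z ∈ T.support ↔ z ∈ [p, q, r, u, v, w] := by
  refine ⟨.cons pv (.cons qv.symm (.cons qw (.cons rw'.symm (.cons ru .nil)))), ?_, ?_⟩
  · simp [Walk.isTrail_def] at nd ⊢
    grind
  · intro z; simp; tauto

set_option maxHeartbeats 1000000 in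
/-- spanning trails between any two vertices of a complete bipartite graph -/
lemma aux_span {p q r u v w : V} (nd : [p, q, r, u, v, w].Nodup)
    (h : ∀ s ∈ [p, q, r], ∀ t ∈ [u, v, w], H.Adj s t) {s t : V} (hst : s ≠ t)
    (hs : s ∈ [p, q, r, u, v, w]) (ht : t ∈ [p, q, r, u, v, w]) :
    ∃ T : H.Walk s t, T.IsTrail ∧ ∀ z, z ∈ T.support ↔ z ∈ [p, q, r, u, v, w] := by
  have key : ∀ p' q' r' u' v' w' : V, [p', q', r', u', v', w'].Nodup →
      (∀ s ∈ [p', q', r'], ∀ t ∈ [u', v', w'], H.Adj s t) →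
      (∀ z, z ∈ [p', q', r', u', v', w'] ↔ z ∈ [p, q, r, u, v, w]) →
      (s = p' ∧ t = q' ∨ s = p' ∧ t = u') → 
      ∃ T : H.Walk s t, T.IsTrail ∧ ∀ z, z ∈ T.support ↔ z ∈ [p, q, r, u, v, w] := by
    intro p' q' r' u' v' w' nd' h' hz hc
    simp only [← hz]
    rcases hc with ⟨rfl, rfl⟩ | ⟨rfl, rfl⟩
    · obtain ⟨T, h1, h2⟩ := aux_same (H := H) (p := t) (q := s) (r := r') (u := u') (v := v')
        (w := w') (by simp at nd' ⊢; grind) (by simp_all) (by simp_all) (by simp_all)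
        (by simp_all) (by simp_all) (by simp_all)
      exact ⟨T, h1, fun z => by rw [h2]; simp; tauto⟩
    · exact aux_opp nd' (by simp_all) (by simp_all) (by simp_all) (by simp_all) (by simp_all)
  have key2 : ∃ p' q' r' u' v' w' : V, [p', q', r', u', v', w'].Nodup ∧
      (∀ s ∈ [p', q', r'], ∀ t ∈ [u', v', w'], H.Adj s t) ∧
      (∀ z, z ∈ [p', q', r', u', v', w'] ↔ z ∈ [p, q, r, u, v, w]) ∧
      (s = p' ∧ t = q' ∨ s = p' ∧ t = u') := by
    have h' : ∀ t ∈ [u, v, w], ∀ s ∈ [p, q, r], H.Adj t s := fun t ht s hs => (h s hs t ht).symm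
    have A : ∀ p q r u v w : V, [p, q, r, u, v, w].Nodup →
      (∀ s ∈ [p, q, r], ∀ t ∈ [u, v, w], H.Adj s t) → s ∈ [p, q, r] →
      t ∈ [p, q, r, u, v, w] →  ∃ p' q' r' u' v' w' : V, [p', q', r', u', v', w'].Nodup ∧
      (∀ s ∈ [p', q', r'], ∀ t ∈ [u', v', w'], H.Adj s t) ∧
      (∀ z, z ∈ [p', q', r', u', v', w'] ↔ z ∈ [p, q, r, u, v, w]) ∧
      (s = p' ∧ t = q' ∨ s = p' ∧ t = u') := by
      intro p q r u v w nd h hs ht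
      have B : ∃ p' q' r', List.Perm [p', q', r'] [p, q, r] ∧ s = p' ∧
          (t = q' ∨ t ∈ [u, v, w]) := by
        simp only [List.mem_cons, List.not_mem_nil, or_false] at hs ht ⊢
        rcases hs with rfl | rfl | rfl
        · by_cases t = r
          · exact ⟨s, r, q, (aux_perm s q r).1, rfl, by tauto⟩
          · exact ⟨s, q, r, (aux_perm s q r).2.2.2.2.2, rfl, by tauto⟩
        · by_cases t = r
          · exact ⟨s, r, p, (aux_perm p s r).2.2.1, rfl, by tauto⟩
          · exact ⟨s, p, r, (aux_perm p s r).2.1, rfl, by tauto⟩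
        · by_cases t = p
          · exact ⟨s, p, q, (aux_perm p q s).2.2.2.1, rfl, by tauto⟩
          · exact ⟨s, q, p, (aux_perm p q s).2.2.2.2.1, rfl, by tauto⟩
      obtain ⟨p', q', r', hp, h1, h2⟩ := B
      have C : ∃ u' v' w', List.Perm [u', v', w'] [u, v, w] ∧ (t = q' ∨ t = u') := by
        rcases h2 with h2 | h2
        · exact ⟨u, v, w, (aux_perm u v w).2.2.2.2.2, .inl h2⟩
        · simp only [List.mem_cons, List.not_mem_nil, or_false] at h2
          rcases h2 with rfl | rfl | rfl
          · exact ⟨t, v, w, (aux_perm t v w).2.2.2.2.2, .inr rfl⟩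
          · exact ⟨t, u, w, (aux_perm u t w).2.1, .inr rfl⟩
          · exact ⟨t, u, v, (aux_perm u v t).2.2.2.1, .inr rfl⟩
      obtain ⟨u', v', w', hq, h3⟩ := C
      have P : List.Perm [p', q', r', u', v', w'] [p, q, r, u, v, w] := hp.append hq
      refine ⟨p', q', r', u', v', w', P.nodup_iff.2 nd, ?_, fun z => P.mem_iff,
        h3.elim (fun k => .inl ⟨h1, k⟩) (fun k => .inr ⟨h1, k⟩)⟩
      intro s hs t ht
      exact h s (hp.mem_iff.1 hs) t (hq.mem_iff.1 ht)
    by_cases hs' : s ∈ [p, q, r]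
    · exact A p q r u v w nd h hs' ht
    · have P : List.Perm [u, v, w, p, q, r] [p, q, r, u, v, w] :=
        List.perm_append_comm (l₁ := [u, v, w]) (l₂ := [p, q, r])
      obtain ⟨p', q', r', u', v', w', h1, h2, h3, h4⟩ := A u v w p q r (P.nodup_iff.2 nd) h'
        (by simp at hs hs' ⊢; tauto) (P.mem_iff.2 ht)
      exact ⟨p', q', r', u', v', w', h1, h2, fun z => (h3 z).trans P.mem_iff, h4⟩
  obtain ⟨p', q', r', u', v', w', h1, h2, h3, h4⟩ := key2
  exact key p' q' r' u' v' w' h1 h2 h3 h4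

/-- the hexagon case -/
lemma aux_hex {a b c d e f : V} (nd : [a, b, c, d, e, f].Nodup)
    (cd : H.Adj c d) (ef : H.Adj e f) (ac : H.Adj a c) (bd : H.Adj b d)
    (ae : H.Adj a e) (bf : H.Adj b f)
    (hR : ∀ g ∈ H.edgeSet, ∃ z ∈ [a, b, c, d, e, f], z ∈ g) :
    ∃ (v : V) (w : H.Walk v v), IsDCT H w := by
  refine ⟨a, .cons ae (.cons ef (.cons bf.symm (.cons bd (.cons cd.symm (.cons ac.symm .nil))))),
    ?_, ?_⟩
  · simp [Walk.isTrail_def] at nd ⊢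
    grind
  · intro g hg
    obtain ⟨z, hz, hzg⟩ := hR g hg
    exact ⟨z, by simp at hz ⊢; tauto, hzg⟩

/-- the complete bipartite case with a single edge off the six vertices -/
lemma aux_k33 (hH : EssentiallyTwoEdgeConnected H) (htf : H.CliqueFree 3)
    {p q r u v w : V} (nd : [p, q, r, u, v, w].Nodup)
    (h : ∀ s ∈ [p, q, r], ∀ t ∈ [u, v, w], H.Adj s t)
    {x y : V} (hxy : H.Adj x y) (hx : x ∉ [p, q, r, u, v, w]) (hy : y ∉ [p, q, r, u, v, w])
    (hR : ∀ g ∈ H.edgeSet, (∀ z ∈ [p, q, r, u, v, w], z ∉ g) → g = s(x, y)) :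
    ∃ (v : V) (w : H.Walk v v), IsDCT H w := by
  classical
  have span := fun (s t : V) => @aux_span V H p q r u v w nd h s t
  have hpu : H.Adj p u := h p (by simp) u (by simp)
  have hpS : p ∈ [p, q, r, u, v, w] := by simp
  have huS : u ∈ [p, q, r, u, v, w] := by simp
  generalize [p, q, r, u, v, w] = S at *
  have out : ∀ t z, (t = x ∨ t = y) → ¬ (z = x ∨ z = y) → H.Adj t z → z ∈ S := by
    intro t z ht hz hadj
    by_contra hzS
    have := hR s(t, z) hadj (by
      intro k hk hk2
      rcases Sym2.mem_iff.1 hk2 with rfl | rfl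
      · rcases ht with rfl | rfl <;> contradiction
      · contradiction)
    rw [Sym2.eq_iff] at this
    grind
  have hpX : ¬ (p = x ∨ p = y) := by rintro (rfl | rfl) <;> contradiction
  have huX : ¬ (u = x ∨ u = y) := by rintro (rfl | rfl) <;> contradiction
  have bd : ∀ G : SimpleGraph V, G.Reachable x p →
      ∃ t z, (t = x ∨ t = y) ∧ ¬ (z = x ∨ z = y) ∧ G.Adj t z := by
    rintro G ⟨W⟩
    obtain ⟨d, -, h1, h2⟩ := W.exists_boundary_dart {t | t = x ∨ t = y} (by simp) hpX
    exact ⟨d.fst, d.snd, h1, h2, d.adj⟩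
  obtain ⟨t, s, ht, hs, hts⟩ := bd H (hH.1 x p)
  obtain ⟨t', s', ht', hs', hts'⟩ := bd (H.deleteEdges {s(t, s)}) (by
    refine hH.2 s(t, s) hts s(x, y) ?_ s(p, u) ?_ x (by simp) p (by simp)
    · rw [mem_edgeSet, deleteEdges_adj]
      refine ⟨hxy, ?_⟩
      simp only [Set.mem_singleton_iff, Sym2.eq_iff]; grind
    · rw [mem_edgeSet, deleteEdges_adj]
      refine ⟨hpu, ?_⟩
      simp only [Set.mem_singleton_iff, Sym2.eq_iff]; grind)
  rw [deleteEdges_adj] at hts'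
  obtain ⟨hts', hne⟩ := hts'
  have hsS := out t s ht hs hts
  have hsS' := out t' s' ht' hs' hts'
  have htS : t ∉ S := by rcases ht with rfl | rfl <;> assumption
  have htS' : t' ∉ S := by rcases ht' with rfl | rfl <;> assumption
  have dom : ∀ W : List V, (∀ z ∈ S, z ∈ W) → t ∈ W → ∀ g ∈ H.edgeSet, ∃ z ∈ W, z ∈ g := by
    intro W h1 h2 g hg
    by_cases hc : ∀ z ∈ S, z ∉ g
    · refine ⟨t, h2, ?_⟩
      rw [hR g hg hc]; simpa using ht
    · push Not at hc
      obtain ⟨z, hz, hzg⟩ := hc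
      exact ⟨z, h1 z hz, hzg⟩
  by_cases htt : t = t'
  · subst htt
    have hss : s' ≠ s := by rintro rfl; exact hne rfl
    obtain ⟨T, hT, hTS⟩ := span s' s hss hsS' hsS
    have n1 : ∀ z, s(t, z) ∉ T.edges := fun z hz =>
      htS ((hTS t).1 (T.fst_mem_support_of_mem_edges hz))
    refine ⟨s, .cons hts.symm (.cons hts' T), ?_, ?_⟩
    · rw [Walk.isTrail_cons, Walk.isTrail_cons]
      refine ⟨⟨hT, n1 _⟩, ?_⟩
      rw [Walk.edges_cons, List.mem_cons, Sym2.eq_swap]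
      rintro (hh | hh)
      · rw [Sym2.eq_iff] at hh; grind
      · exact n1 _ hh
    · apply dom
      · intro z hz; simp [hTS, hz]
      · simp
  · have htt' : H.Adj t t' := by
      rcases ht with rfl | rfl <;> rcases ht' with rfl | rfl
      · exact absurd rfl htt
      · exact hxy
      · exact hxy.symm
      · exact absurd rfl htt
    have hss : s' ≠ s := by
      rintro rfl
      exact aux_no_tri htf htt' hts hts'
    obtain ⟨T, hT, hTS⟩ := span s' s hss hsS' hsS
    have n1 : ∀ z, s(t, z) ∉ T.edges := fun z hz =>
      htS ((hTS t).1 (T.fst_mem_support_of_mem_edges hz))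
    have n2 : ∀ z, s(t', z) ∉ T.edges := fun z hz =>
      htS' ((hTS t').1 (T.fst_mem_support_of_mem_edges hz))
    refine ⟨s, .cons hts.symm (.cons htt' (.cons hts' T)), ?_, ?_⟩
    · rw [Walk.isTrail_cons, Walk.isTrail_cons, Walk.isTrail_cons]
      refine ⟨⟨⟨hT, n2 _⟩, ?_⟩, ?_⟩
      · rw [Walk.edges_cons, List.mem_cons]
        rintro (hh | hh)
        · rw [Sym2.eq_iff] at hh; grind
        · exact n1 _ hh
      · rw [Walk.edges_cons, Walk.edges_cons, List.mem_cons, List.mem_cons, Sym2.eq_swap]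
        rintro (hh | hh | hh)
        · rw [Sym2.eq_iff] at hh; grind
        · rw [Sym2.eq_iff] at hh; grind
        · exact n1 _ hh
    · apply dom
      · intro z hz; simp [hTS, hz]
      · simp

/-- neighbouring edges of an edge -/
def auxD (H : SimpleGraph V) (e : Sym2 V) : Set (Sym2 V) :=
  {f | f ∈ H.edgeSet ∧ f ≠ e ∧ ∃ v, v ∈ f ∧ v ∈ e}

lemma aux_inter (htf : H.CliqueFree 3) {a b c d : V} (ab : H.Adj a b) (cd : H.Adj c d)
    (hn : EdgesNonadj s(a, b) s(c, d)) :
    (auxD H s(a, b) ∩ auxD H s(c, d)).ncard ≤ 2 ∧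
    (2 ≤ (auxD H s(a, b) ∩ auxD H s(c, d)).ncard →
      (H.Adj a c ∧ H.Adj b d) ∨ (H.Adj a d ∧ H.Adj b c)) := by
  classical
  have hac : a ≠ c := by rintro rfl; exact hn a (by simp) (by simp)
  have had : a ≠ d := by rintro rfl; exact hn a (by simp) (by simp)
  have hbc : b ≠ c := by rintro rfl; exact hn b (by simp) (by simp)
  have hbd : b ≠ d := by rintro rfl; exact hn b (by simp) (by simp)
  have mem : ∀ g ∈ auxD H s(a, b) ∩ auxD H s(c, d), (g = s(a, c) ∧ H.Adj a c) ∨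
      (g = s(a, d) ∧ H.Adj a d) ∨ (g = s(b, c) ∧ H.Adj b c) ∨ (g = s(b, d) ∧ H.Adj b d) := by
    rintro g ⟨⟨hg, -, v, hv, hv'⟩, ⟨-, -, w, hw, hw'⟩⟩
    have hvw : v ≠ w := by rintro rfl; exact hn v hv' hw'
    have := (Sym2.mem_and_mem_iff hvw).1 ⟨hv, hw⟩
    subst this
    rw [mem_edgeSet] at hg
    rcases Sym2.mem_iff.1 hv' with rfl | rfl <;> rcases Sym2.mem_iff.1 hw' with rfl | rfl <;> simp [hg]
  have t1 : ¬ (H.Adj a c ∧ H.Adj a d) := fun h => aux_no_tri htf h.1 h.2 cd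
  have t2 : ¬ (H.Adj b c ∧ H.Adj b d) := fun h => aux_no_tri htf h.1 h.2 cd
  have t3 : ¬ (H.Adj a c ∧ H.Adj b c) := fun h => aux_no_tri htf ab h.1 h.2
  have t4 : ¬ (H.Adj a d ∧ H.Adj b d) := fun h => aux_no_tri htf ab h.1 h.2
  generalize auxD H s(a, b) ∩ auxD H s(c, d) = I at *
  have two : ∀ g₁ g₂ : Sym2 V, I ⊆ {g₁, g₂} → I.ncard ≤ 2 := fun g₁ g₂ hs =>
    (Set.ncard_le_ncard hs (by simp)).trans ((Set.ncard_insert_le _ _).trans (by simp))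
  have one : ∀ g₁ : Sym2 V, I ⊆ {g₁} → I.ncard ≤ 1 := fun g₁ hs =>
    (Set.ncard_le_ncard hs (by simp)).trans (by simp)
  constructor
  · by_cases hh : H.Adj a c ∨ H.Adj b d
    · exact two s(a, c) s(b, d) fun g hg => by
        have := mem g hg
        simp only [Set.mem_insert_iff, Set.mem_singleton_iff]; tauto
    · exact two s(a, d) s(b, c) fun g hg => by
        have := mem g hg
        simp only [Set.mem_insert_iff, Set.mem_singleton_iff]; tauto
  · intro h2
    by_contra hcon
    have : I.ncard ≤ 1 := by
      by_cases h1 : H.Adj a c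
      · exact one s(a, c) fun g hg => by
          have := mem g hg
          rw [Set.mem_singleton_iff]; tauto
      by_cases h1 : H.Adj a d
      · exact one s(a, d) fun g hg => by
          have := mem g hg
          rw [Set.mem_singleton_iff]; tauto
      by_cases h1 : H.Adj b c
      · exact one s(b, c) fun g hg => by
          have := mem g hg
          rw [Set.mem_singleton_iff]; tauto
      · exact one s(b, d) fun g hg => by
          have := mem g hg
          rw [Set.mem_singleton_iff]; tauto
    omega

/-- edges avoiding all three matching edges -/
def auxR (H : SimpleGraph V) (e₁ e₂ e₃ : Sym2 V) : Set (Sym2 V) :=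
  {f | f ∈ H.edgeSet ∧ ∀ v ∈ f, v ∉ e₁ ∧ v ∉ e₂ ∧ v ∉ e₃}

set_option maxHeartbeats 1000000 in
/-- the main structural step, with the first edge doubly joined to the two others -/
lemma aux_core [Finite V] (hH : EssentiallyTwoEdgeConnected H) (htf : H.CliqueFree 3)
    (e₁ e₂ e₃ : Sym2 V)
    (he₁ : e₁ ∈ H.edgeSet) (he₂ : e₂ ∈ H.edgeSet) (he₃ : e₃ ∈ H.edgeSet)
    (h12 : EdgesNonadj e₁ e₂) (h13 : EdgesNonadj e₁ e₃) (h23 : EdgesNonadj e₂ e₃)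
    (m12 : 2 ≤ (auxD H e₁ ∩ auxD H e₂).ncard) (m13 : 2 ≤ (auxD H e₁ ∩ auxD H e₃).ncard)
    (m23 : 1 + (auxR H e₁ e₂ e₃).ncard ≤ (auxD H e₂ ∩ auxD H e₃).ncard) :
    ∃ (v : V) (w : H.Walk v v), IsDCT H w := by
  induction e₁ with | _ a b
  induction e₂ with | _ c d
  induction e₃ with | _ e f
  rw [mem_edgeSet] at he₁ he₂ he₃
  have a1 := (aux_inter htf he₁ he₂ h12).2 m12
  have a2 := (aux_inter htf he₁ he₃ h13).2 m13
  have a3 := aux_inter htf he₂ he₃ h23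
  wlog hac : H.Adj a c ∧ H.Adj b d generalizing c d
  · have sw : s(c, d) = s(d, c) := Sym2.eq_swap
    rw [sw] at h12 h23 m12 m23
    exact this d c he₂.symm h12 m12 h23 m23 a1.symm (aux_inter htf he₂.symm he₃ h23)
      (a1.resolve_left hac)
  wlog hae : H.Adj a e ∧ H.Adj b f generalizing e f
  · have sw : s(e, f) = s(f, e) := Sym2.eq_swap
    rw [sw] at h13 h23 m13 m23
    exact this f e he₃.symm h13 m13 a2.symm h23 m23 (aux_inter htf he₂ he₃.symm h23)
      (a2.resolve_left hae)
  have nd : [a, b, c, d, e, f].Nodup := by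
    have := he₁.ne
    have := he₂.ne
    have := he₃.ne
    simp only [EdgesNonadj, Sym2.mem_iff] at h12 h13 h23
    simp only [List.nodup_cons, List.mem_cons, List.not_mem_nil, or_false]
    grind
  have hReq : ∀ g, g ∈ auxR H s(a, b) s(c, d) s(e, f) ↔
      g ∈ H.edgeSet ∧ ∀ z ∈ [a, b, c, d, e, f], z ∉ g := by
    intro g
    simp only [auxR, Set.mem_ofPred_eq, Sym2.mem_iff, List.mem_cons, List.not_mem_nil, or_false]
    refine and_congr_right fun _ => ⟨fun h z hz hzg => ?_, fun h z hz => ?_⟩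
    · have := h z hzg
      rcases hz with hz | hz | hz | hz | hz | hz <;> simp [hz] at this
    · refine ⟨fun hh => h z ?_ hz, fun hh => h z ?_ hz, fun hh => h z ?_ hz⟩ <;>
        rcases hh with hh | hh <;> simp [hh]
  by_cases hR : auxR H s(a, b) s(c, d) s(e, f) = ∅
  · refine aux_hex nd he₂ he₃ hac.1 hac.2 hae.1 hae.2 ?_
    intro g hg
    by_contra hcon
    push Not at hcon
    have : g ∈ auxR H s(a, b) s(c, d) s(e, f) := (hReq g).2 ⟨hg, hcon⟩
    rw [hR] at this
    exact this
  · have hpos := (Set.ncard_pos (Set.toFinite _)).2 (Set.nonempty_iff_ne_empty.2 hR)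
    have h1 : (auxR H s(a, b) s(c, d) s(e, f)).ncard = 1 := by omega
    obtain ⟨g, hg⟩ := Set.ncard_eq_one.1 h1
    have hce : ¬ (H.Adj c e) := fun hh => aux_no_tri htf hac.1 hae.1 hh
    obtain ⟨hcf, hde⟩ : H.Adj c f ∧ H.Adj d e := by
      have := a3.2 (by omega); tauto
    have hgm := (hReq g).1 (by rw [hg]; rfl)
    induction g with | _ x y
    have P : ∀ z, z ∈ [a, d, f, b, c, e] ↔ z ∈ [a, b, c, d, e, f] := by
      intro z; simp; tauto
    refine aux_k33 hH htf (p := a) (q := d) (r := f) (u := b) (v := c) (w := e) (x := x) (y := y)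
      ?_ ?_ hgm.1 ?_ ?_ ?_
    · simp only [List.nodup_cons, List.mem_cons, List.not_mem_nil, or_false] at nd ⊢
      grind
    · simp [he₁, hac, hae, he₂.symm, hac.2.symm, hde, hae.2.symm, hcf.symm, he₃.symm]
    · rw [P]; intro hh; exact hgm.2 x hh (by simp)
    · rw [P]; intro hh; exact hgm.2 y hh (by simp)
    · intro k hk hz
      have : k ∈ auxR H s(a, b) s(c, d) s(e, f) :=
        (hReq k).2 ⟨hk, fun z hh => hz z ((P z).2 hh)⟩
      rw [hg] at this
      exact this

lemma aux_nonadj_symm {e f : Sym2 V} (h : EdgesNonadj e f) : EdgesNonadj f e :=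
  fun v h1 h2 => h v h2 h1

lemma aux_inter_le (htf : H.CliqueFree 3) {e f : Sym2 V} (he : e ∈ H.edgeSet)
    (hf : f ∈ H.edgeSet) (hn : EdgesNonadj e f) : (auxD H e ∩ auxD H f).ncard ≤ 2 := by
  induction e with | _ a b
  induction f with | _ c d
  exact (aux_inter htf he hf hn).1

lemma aux_count [Finite V] (e₁ e₂ e₃ : Sym2 V)
    (he₁ : e₁ ∈ H.edgeSet) (he₂ : e₂ ∈ H.edgeSet) (he₃ : e₃ ∈ H.edgeSet)
    (h12 : EdgesNonadj e₁ e₂) (h13 : EdgesNonadj e₁ e₃) (h23 : EdgesNonadj e₂ e₃) :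
    (auxD H e₁).ncard + (auxD H e₂).ncard + (auxD H e₃).ncard + 3 + (auxR H e₁ e₂ e₃).ncard ≤
      H.edgeSet.ncard + (auxD H e₁ ∩ auxD H e₂).ncard + (auxD H e₁ ∩ auxD H e₃).ncard +
      (auxD H e₂ ∩ auxD H e₃).ncard := by
  classical
  have ex : ∀ g : Sym2 V, ∃ v, v ∈ g := fun g => by
    induction g with | _ a b
    exact ⟨a, by simp⟩
  have ne : ∀ {g k : Sym2 V}, EdgesNonadj g k → g ≠ k := by
    rintro g k h rfl
    obtain ⟨v, hv⟩ := ex g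
    exact h v hv hv
  have s1 := Set.ncard_union_add_ncard_inter (auxD H e₁) (auxD H e₂)
  have s2 := Set.ncard_union_add_ncard_inter (auxD H e₁ ∪ auxD H e₂) (auxD H e₃)
  have s3 := Set.ncard_union_le (auxD H e₁ ∩ auxD H e₃) (auxD H e₂ ∩ auxD H e₃)
  rw [← Set.union_inter_distrib_right] at s3
  have c3 : ({e₁, e₂, e₃} : Set (Sym2 V)).ncard = 3 :=
    Set.ncard_eq_three.2 ⟨e₁, e₂, e₃, ne h12, ne h13, ne h23, rfl⟩
  set U := auxD H e₁ ∪ auxD H e₂ ∪ auxD H e₃ with hU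
  have d1 : Disjoint U {e₁, e₂, e₃} := by
    rw [Set.disjoint_left]
    intro g hg hg'
    simp only [hU, auxD, Set.mem_union, Set.mem_ofPred_eq] at hg
    simp only [Set.mem_insert_iff, Set.mem_singleton_iff] at hg'
    simp only [EdgesNonadj] at h12 h13 h23
    rcases hg' with rfl | rfl | rfl <;> grind
  have d2 : Disjoint (U ∪ {e₁, e₂, e₃}) (auxR H e₁ e₂ e₃) := by
    rw [Set.disjoint_left]
    intro g hg hg'
    simp only [hU, auxD, Set.mem_union, Set.mem_ofPred_eq, Set.mem_insert_iff,
      Set.mem_singleton_iff] at hg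
    have hg'' := hg'.2
    obtain ⟨v, hv⟩ := ex g
    have := hg'' v hv
    rcases hg with ((⟨-, -, w, hw, hw'⟩ | ⟨-, -, w, hw, hw'⟩) | ⟨-, -, w, hw, hw'⟩) | rfl | rfl | rfl
    · exact (hg'' w hw).1 hw'
    · exact (hg'' w hw).2.1 hw'
    · exact (hg'' w hw).2.2 hw'
    · exact this.1 hv
    · exact this.2.1 hv
    · exact this.2.2 hv
  have sub : U ∪ {e₁, e₂, e₃} ∪ auxR H e₁ e₂ e₃ ⊆ H.edgeSet := by
    rintro g (((( hg | hg) | hg) | hg) | hg)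
    · exact hg.1
    · exact hg.1
    · exact hg.1
    · rcases hg with rfl | rfl | rfl <;> assumption
    · exact hg.1
  have u := Set.ncard_le_ncard sub (Set.toFinite _)
  rw [Set.ncard_union_eq d2, Set.ncard_union_eq d1, c3] at u
  omega

end Aux

/-- In an essentially 2-edge-connected triangle-free graph with `n` edges and no
dominating closed trail, any matching of three edges has total edge-degree at
most `n + 1`. -/
theorem matching_edgeDeg_bound {V : Type*} [Fintype V] (H : SimpleGraph V)
    (hH : EssentiallyTwoEdgeConnected H) (htf : H.CliqueFree 3)
    (hnoDCT : ¬ ∃ (v : V) (w : H.Walk v v), IsDCT H w)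
    (e₁ e₂ e₃ : Sym2 V)
    (he₁ : e₁ ∈ H.edgeSet) (he₂ : e₂ ∈ H.edgeSet) (he₃ : e₃ ∈ H.edgeSet)
    (h12 : EdgesNonadj e₁ e₂) (h13 : EdgesNonadj e₁ e₃) (h23 : EdgesNonadj e₂ e₃) :
    edgeDeg H e₁ + edgeDeg H e₂ + edgeDeg H e₃ ≤ H.edgeSet.ncard + 1 := by
  have cnt := aux_count e₁ e₂ e₃ he₁ he₂ he₃ h12 h13 h23
  have l12 := aux_inter_le htf he₁ he₂ h12
  have l13 := aux_inter_le htf he₁ he₃ h13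
  have l23 := aux_inter_le htf he₂ he₃ h23
  change (auxD H e₁).ncard + (auxD H e₂).ncard + (auxD H e₃).ncard ≤ _
  by_contra hcon
  have r2 : auxR H e₂ e₁ e₃ = auxR H e₁ e₂ e₃ := by
    ext g; simp only [auxR, Set.mem_ofPred_eq]; grind
  have r3 : auxR H e₃ e₁ e₂ = auxR H e₁ e₂ e₃ := by
    ext g; simp only [auxR, Set.mem_ofPred_eq]; grind
  have i21 := Set.inter_comm (auxD H e₂) (auxD H e₁)
  have i31 := Set.inter_comm (auxD H e₃) (auxD H e₁)
  have i32 := Set.inter_comm (auxD H e₃) (auxD H e₂)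
  apply hnoDCT
  by_cases c12 : 2 ≤ (auxD H e₁ ∩ auxD H e₂).ncard
  · by_cases c13 : 2 ≤ (auxD H e₁ ∩ auxD H e₃).ncard
    · exact aux_core hH htf e₁ e₂ e₃ he₁ he₂ he₃ h12 h13 h23 c12 c13 (by omega)
    · exact aux_core hH htf e₂ e₁ e₃ he₂ he₁ he₃ (aux_nonadj_symm h12) h23 h13
        (by rw [i21]; omega) (by omega) (by rw [r2]; omega)
  · exact aux_core hH htf e₃ e₁ e₂ he₃ he₁ he₂ (aux_nonadj_symm h13) (aux_nonadj_symm h23) h12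
        (by rw [i31]; omega) (by rw [i32]; omega) (by rw [r3]; omega)
end
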